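/- arXiv:2410.11249 — 2 statements merged into one kernel-verified Lean document; each statement's English description precedes it below -/
import Mathlib

section
/- Let α>1, L>0, and let K⊂ℝ^n and K_1⊂ℝ^m be compact boxes. Let Y:ℝ^n→ℝ be smooth with ‖Y‖_{α,L} (Gevrey norm on K, with all widths equal to L) finite, and let u=(u_1,…,u_n) be a map whose components u_j:ℝ^m→ℝ are smooth with finite Gevrey-(α,𝑳) norms on K_1, where 𝑳∈(0,∞)^m. If u(K_1)⊆K and for every 1≤j≤n one has ‖u_j‖_{α,𝑳} − ‖u_j‖_{C⁰(K_1)} ≤ L^α/m^{α−1}, then the composition Y∘u has finite Gevrey-(α,𝑳) norm on K_1 and ‖Y∘u‖_{α,𝑳} ≤ ‖Y‖_{α,L}. -/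
/-!
Write `T_x f` for the formal Taylor series of `f` at `x`, with coefficients `∂^k f(x) / k!`. By the
Leibniz rule `T_x` is multiplicative (`taylorAt_mul`), and it intertwines `∂_p` with the formal
derivative in the `p`-th variable. Let `W_j` be the series of absolute values of the coefficients of
`T_x u_j`, without constant term. The chain rule and induction on the order give
`|∂^k (Y ∘ u)(x)| / k! ≤ ∑_ν |∂^ν Y(u x)| / ν! · [t^k] W^ν`,
which is Faà di Bruno's formula with absolute values (`faaDiBruno_majorant`). The series have
coefficients in `ℝ≥0∞`, so that infinite sums need no convergence argument.

The Gevrey norm multiplies the `k`-th Taylor coefficient by the weight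
`ω_k = (L^k)^α / (k!)^(α - 1)`. Expanding `W^ν` produces `|ν|` nonzero multi-indices `l_i ∈ ℕ^m` with
sum `k`, and for these `ν! ∏ l_i! ≤ m^|ν| k!` (`card_factorial_le`): distribute the `l_i` into `m`
groups of sizes `N_p`, according to a coordinate `p` where `l_i` is nonzero; then
`ν! ≤ |ν|! ≤ m^|ν| ∏ N_p!` by the multinomial theorem, while in the coordinate `p` at least `N_p`
entries are positive, so `N_p! ∏_i l_{i,p}! ≤ k_p!`. Raising this to the power `α - 1` yields
`ω_k ≤ (m^|ν| / ν!)^(α - 1) ∏ ω_{l_i}`.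

Summing over `k`, each factor `W_j` turns into `‖u_j‖ - ‖u_j‖_{C⁰} ≤ L^α / m^(α - 1)`, the powers of
`m` cancel, and what remains is `∑_ν (L^|ν| / ν!)^α ‖∂^ν Y‖_{C⁰}`, the norm of `Y`.
-/

open scoped BigOperators

noncomputable section

/-- Partial derivative in the `j`-th coordinate direction. -/
def pd {E : Type*} [NormedAddCommGroup E] [NormedSpace ℝ E] {n : ℕ}
    (j : Fin n) (φ : (Fin n → ℝ) → E) : (Fin n → ℝ) → E :=
  fun x => fderiv ℝ φ x (Pi.single j 1)

/-- Mixed partial derivative `∂^k = ∂₁^{k₁} ⋯ ∂ₙ^{kₙ}`. -/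
def mpd {E : Type*} [NormedAddCommGroup E] [NormedSpace ℝ E] {n : ℕ}
    (k : Fin n → ℕ) (φ : (Fin n → ℝ) → E) : (Fin n → ℝ) → E :=
  (List.finRange n).foldr (fun j ψ => (pd j)^[k j] ψ) φ

/-- Sup (C⁰) norm of `ψ` on `K`. -/
def supOn {E : Type*} [NormedAddCommGroup E] {n : ℕ}
    (K : Set (Fin n → ℝ)) (ψ : (Fin n → ℝ) → E) : ℝ :=
  sSup ((fun x => ‖ψ x‖) '' K)

/-- The `k`-th term of the Gevrey-(α, Lv) norm of `φ` on `K`. -/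
def gevreyTerm {E : Type*} [NormedAddCommGroup E] [NormedSpace ℝ E] {n : ℕ}
    (α : ℝ) (L : Fin n → ℝ) (K : Set (Fin n → ℝ))
    (φ : (Fin n → ℝ) → E) (k : Fin n → ℕ) : ℝ :=
  ((∏ j, L j ^ k j) / ∏ j, (Nat.factorial (k j) : ℝ)) ^ α * supOn K (mpd k φ)

/-! ### Partial derivatives of smooth functions -/

theorem pd_contDiff {n : ℕ} (p : Fin n) {f : (Fin n → ℝ) → ℝ}
    (hf : ContDiff ℝ (⊤ : ℕ∞) f) : ContDiff ℝ (⊤ : ℕ∞) (pd p f) := by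
  unfold pd
  exact (hf.fderiv_right (m := (⊤ : ℕ∞)) (by simp)).clm_apply contDiff_const

theorem pd_comm {n : ℕ} (p q : Fin n) {f : (Fin n → ℝ) → ℝ}
    (hf : ContDiff ℝ (⊤ : ℕ∞) f) : pd p (pd q f) = pd q (pd p f) := by
  funext x
  have hd : DifferentiableAt ℝ (fderiv ℝ f) x :=
    ((hf.fderiv_right (m := (⊤ : ℕ∞)) (by simp)).differentiable (by simp)) x
  have key : ∀ a b : Fin n, pd a (pd b f) x
      = fderiv ℝ (fderiv ℝ f) x (Pi.single a 1) (Pi.single b 1) := by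
    intro a b
    unfold pd
    rw [fderiv_clm_apply hd (differentiableAt_const _)]
    simp
  rw [key, key]
  exact (hf.contDiffAt.isSymmSndFDerivAt (by simp; exact WithTop.coe_le_coe.2 le_top)) _ _

theorem pd_iterate_contDiff {n : ℕ} (p : Fin n) (r : ℕ) {f : (Fin n → ℝ) → ℝ}
    (hf : ContDiff ℝ (⊤ : ℕ∞) f) : ContDiff ℝ (⊤ : ℕ∞) ((pd p)^[r] f) := by
  induction r with
  | zero => exact hf
  | succ r ih => rw [Function.iterate_succ_apply']; exact pd_contDiff p ih

theorem pd_iterate_comm {n : ℕ} (p q : Fin n) (r : ℕ) {f : (Fin n → ℝ) → ℝ}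
    (hf : ContDiff ℝ (⊤ : ℕ∞) f) : pd p ((pd q)^[r] f) = (pd q)^[r] (pd p f) := by
  induction r with
  | zero => rfl
  | succ r ih =>
    rw [Function.iterate_succ_apply', Function.iterate_succ_apply',
      pd_comm p q (pd_iterate_contDiff q r hf), ih]

theorem foldr_pd_contDiff {n : ℕ} (k : Fin n → ℕ) (l : List (Fin n)) {f : (Fin n → ℝ) → ℝ}
    (hf : ContDiff ℝ (⊤ : ℕ∞) f) :
    ContDiff ℝ (⊤ : ℕ∞) (l.foldr (fun j ψ => (pd j)^[k j] ψ) f) := by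
  induction l with
  | nil => exact hf
  | cons j l ih => exact pd_iterate_contDiff j _ ih

theorem pd_foldr {n : ℕ} (p : Fin n) (k : Fin n → ℕ) (l : List (Fin n)) {f : (Fin n → ℝ) → ℝ}
    (hf : ContDiff ℝ (⊤ : ℕ∞) f) :
    pd p (l.foldr (fun j ψ => (pd j)^[k j] ψ) f)
      = l.foldr (fun j ψ => (pd j)^[k j] ψ) (pd p f) := by
  induction l with
  | nil => rfl
  | cons j l ih =>
    simp only [List.foldr_cons]
    rw [pd_iterate_comm p j _ (foldr_pd_contDiff k l hf), ih]

theorem mpd_contDiff {n : ℕ} (k : Fin n → ℕ) {f : (Fin n → ℝ) → ℝ}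
    (hf : ContDiff ℝ (⊤ : ℕ∞) f) : ContDiff ℝ (⊤ : ℕ∞) (mpd k f) :=
  foldr_pd_contDiff k _ hf

theorem mpd_zero {n : ℕ} (f : (Fin n → ℝ) → ℝ) : mpd 0 f = f := by
  unfold mpd
  induction List.finRange n with
  | nil => rfl
  | cons j l ih => simp

/-- Derivatives of smooth functions may be taken in any order, so that `∂^(k + e_p) = ∂^k ∂_p`. -/
theorem mpd_add_single {n : ℕ} (p : Fin n) (k : Fin n → ℕ) {f : (Fin n → ℝ) → ℝ}
    (hf : ContDiff ℝ (⊤ : ℕ∞) f) : mpd (k + Pi.single p 1) f = mpd k (pd p f) := by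
  have aux₁ : ∀ l : List (Fin n), p ∉ l →
      l.foldr (fun j ψ => (pd j)^[(k + Pi.single p 1 : Fin n → ℕ) j] ψ) f
        = l.foldr (fun j ψ => (pd j)^[k j] ψ) f := by
    intro l hl
    induction l with
    | nil => rfl
    | cons j l ih =>
      simp only [List.mem_cons, not_or] at hl
      simp only [List.foldr_cons]
      rw [ih hl.2]
      simp [Pi.single_eq_of_ne (Ne.symm hl.1)]
  have aux₂ : ∀ l : List (Fin n), l.Nodup → p ∈ l →
      l.foldr (fun j ψ => (pd j)^[(k + Pi.single p 1 : Fin n → ℕ) j] ψ) f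
        = l.foldr (fun j ψ => (pd j)^[k j] ψ) (pd p f) := by
    intro l hn hl
    induction l with
    | nil => simp at hl
    | cons j l ih =>
      simp only [List.foldr_cons]
      rw [List.nodup_cons] at hn
      by_cases hj : j = p
      · subst hj
        rw [aux₁ l hn.1]
        simp only [Pi.add_apply, Pi.single_eq_same, Function.iterate_succ_apply]
        rw [pd_foldr j k l hf]
      · have hl' : p ∈ l := by
          rcases List.mem_cons.1 hl with h | h
          · exact absurd h.symm hj
          · exact h
        rw [ih hn.2 hl']
        simp [Pi.single_eq_of_ne hj]
  exact aux₂ _ (List.nodup_finRange n) (List.mem_finRange p)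

theorem mpd_add {n : ℕ} (k : Fin n → ℕ) {f g : (Fin n → ℝ) → ℝ}
    (hf : ContDiff ℝ (⊤ : ℕ∞) f) (hg : ContDiff ℝ (⊤ : ℕ∞) g) :
    mpd k (f + g) = mpd k f + mpd k g := by
  have one : ∀ (p : Fin n) {f g : (Fin n → ℝ) → ℝ}, ContDiff ℝ (⊤ : ℕ∞) f →
      ContDiff ℝ (⊤ : ℕ∞) g → pd p (f + g) = pd p f + pd p g := by
    intro p f g hf hg
    funext x
    simp only [pd, Pi.add_apply]
    rw [fderiv_add (hf.differentiable (by simp) x) (hg.differentiable (by simp) x)]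
    rfl
  have iter : ∀ (p : Fin n) (r : ℕ) {f g : (Fin n → ℝ) → ℝ}, ContDiff ℝ (⊤ : ℕ∞) f →
      ContDiff ℝ (⊤ : ℕ∞) g → (pd p)^[r] (f + g) = (pd p)^[r] f + (pd p)^[r] g := by
    intro p r f g hf hg
    induction r with
    | zero => rfl
    | succ r ih =>
      simp only [Function.iterate_succ_apply']
      rw [ih, one p (pd_iterate_contDiff p r hf) (pd_iterate_contDiff p r hg)]
  unfold mpd
  induction List.finRange n with
  | nil => rfl
  | cons j l ih =>
    simp only [List.foldr_cons]
    rw [ih, iter j _ (foldr_pd_contDiff k l hf) (foldr_pd_contDiff k l hg)]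

theorem pd_mul {n : ℕ} (p : Fin n) {f g : (Fin n → ℝ) → ℝ}
    (hf : ContDiff ℝ (⊤ : ℕ∞) f) (hg : ContDiff ℝ (⊤ : ℕ∞) g) :
    pd p (f * g) = f * pd p g + g * pd p f := by
  funext x
  unfold pd
  rw [fderiv_mul (hf.differentiable (by simp) x) (hg.differentiable (by simp) x)]
  simp

theorem pd_comp {n m : ℕ} (p : Fin m) {Y : (Fin n → ℝ) → ℝ} (hY : ContDiff ℝ (⊤ : ℕ∞) Y)
    {u : Fin n → (Fin m → ℝ) → ℝ} (hu : ∀ j, ContDiff ℝ (⊤ : ℕ∞) (u j)) :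
    pd p (fun x => Y fun j => u j x)
      = ∑ j, (fun x => pd j Y fun i => u i x) * pd p (u j) := by
  funext x
  have hd : ∀ j, DifferentiableAt ℝ (u j) x := fun j => (hu j).differentiable (by simp) x
  have hU : HasFDerivAt (fun x j => u j x)
      (ContinuousLinearMap.pi fun j => fderiv ℝ (u j) x) x :=
    hasFDerivAt_pi.2 fun j => (hd j).hasFDerivAt
  have hc := ((hY.differentiable (by simp) (fun j => u j x)).hasFDerivAt).comp x hU
  have : pd p (fun x => Y fun j => u j x) x
      = fderiv ℝ Y (fun j => u j x) (fun j => pd p (u j) x) := by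
    unfold pd
    rw [show (fun x => Y fun j => u j x) = Y ∘ (fun x j => u j x) from rfl, hc.fderiv]
    rfl
  rw [this, Finset.sum_apply]
  conv_lhs => rw [pi_eq_sum_univ' (fun j => pd p (u j) x)]
  rw [map_sum]
  refine Finset.sum_congr rfl fun j _ => ?_
  rw [map_smul]
  simp only [pd, Pi.mul_apply, smul_eq_mul]
  rw [mul_comm]

/-! ### Taylor series -/

/-- The formal Taylor series of `f` at `x`, with coefficients `∂^k f(x) / k!`. -/
def taylorAt {n : ℕ} (f : (Fin n → ℝ) → ℝ) (x : Fin n → ℝ) : MvPowerSeries (Fin n) ℝ :=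
  fun k => mpd (⇑k) f x / ∏ j, (Nat.factorial (k j) : ℝ)

theorem coeff_taylorAt {n : ℕ} (f : (Fin n → ℝ) → ℝ) (x : Fin n → ℝ) (k : Fin n →₀ ℕ) :
    MvPowerSeries.coeff k (taylorAt f x) = mpd (⇑k) f x / ∏ j, (Nat.factorial (k j) : ℝ) := rfl

theorem coeff_zero_taylorAt {n : ℕ} (f : (Fin n → ℝ) → ℝ) (x : Fin n → ℝ) :
    MvPowerSeries.coeff 0 (taylorAt f x) = f x := by
  rw [coeff_taylorAt, Finsupp.coe_zero, mpd_zero]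
  simp

theorem taylorAt_add {n : ℕ} {f g : (Fin n → ℝ) → ℝ} (hf : ContDiff ℝ (⊤ : ℕ∞) f)
    (hg : ContDiff ℝ (⊤ : ℕ∞) g) (x : Fin n → ℝ) :
    taylorAt (f + g) x = taylorAt f x + taylorAt g x := by
  ext k
  rw [map_add, coeff_taylorAt, coeff_taylorAt, coeff_taylorAt, mpd_add _ hf hg, Pi.add_apply,
    add_div]

theorem prod_factorial_add_single {n : ℕ} (p : Fin n) (k : Fin n →₀ ℕ) :
    ∏ j, Nat.factorial ((k + Finsupp.single p 1 : Fin n →₀ ℕ) j)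
      = (k p + 1) * ∏ j, Nat.factorial (k j) := by
  rw [← Finset.mul_prod_erase _ _ (Finset.mem_univ p),
    ← Finset.mul_prod_erase _ (fun j => Nat.factorial (k j)) (Finset.mem_univ p), ← mul_assoc]
  congr 1
  · simp [Nat.factorial_succ]
  · refine Finset.prod_congr rfl fun j hj => ?_
    simp [(Finset.ne_of_mem_erase hj).symm]

theorem pderiv_taylorAt {n : ℕ} (p : Fin n) {f : (Fin n → ℝ) → ℝ}
    (hf : ContDiff ℝ (⊤ : ℕ∞) f) (x : Fin n → ℝ) :
    MvPowerSeries.pderiv ℝ p (taylorAt f x) = taylorAt (pd p f) x := by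
  ext k
  rw [MvPowerSeries.coeff_pderiv, coeff_taylorAt, coeff_taylorAt, Finsupp.coe_add,
    Finsupp.single_eq_pi_single, mpd_add_single p _ hf]
  have h := prod_factorial_add_single p k
  rw [Finsupp.coe_add, Finsupp.single_eq_pi_single] at h
  have h' : (∏ j, (Nat.factorial ((⇑k + Pi.single p 1 : Fin n → ℕ) j) : ℝ))
      = (k p + 1) * ∏ j, (Nat.factorial (k j) : ℝ) := by exact_mod_cast h
  rw [h']
  have h0 : (∏ j, (Nat.factorial (k j) : ℝ)) ≠ 0 :=
    Finset.prod_ne_zero_iff.2 fun j _ => by positivity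
  have h1 : (k p + 1 : ℝ) ≠ 0 := by positivity
  field_simp

/-- Induction on multi-indices along the steps `k ↦ k + e_p`. -/
theorem multiIndex_induction {n : ℕ} {P : (Fin n →₀ ℕ) → Prop} (h0 : P 0)
    (hs : ∀ p k, P k → P (k + Finsupp.single p 1)) (k : Fin n →₀ ℕ) : P k := by
  suffices h : ∀ k l, P l → P (l + k) by simpa using h k 0 h0
  intro k
  induction k using Finsupp.induction_linear with
  | zero => intro l hl; simpa using hl
  | add f g hf hg => intro l hl; rw [← add_assoc]; exact hg _ (hf _ hl)
  | single a b =>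
    induction b with
    | zero => intro l hl; simpa using hl
    | succ b ih => intro l hl; rw [Finsupp.single_add, ← add_assoc]; exact hs _ _ (ih _ hl)

/-- Strong form of `multiIndex_induction`, with the hypothesis available for all smaller
multi-indices. -/
theorem multiIndex_strong_induction {n : ℕ} {P : (Fin n →₀ ℕ) → Prop} (h0 : P 0)
    (hs : ∀ p k, (∀ a ≤ k, P a) → P (k + Finsupp.single p 1)) (k : Fin n →₀ ℕ) : P k := by
  suffices h : ∀ a ≤ k, P a from h k le_rfl
  induction k using multiIndex_induction with
  | h0 => intro a ha; rwa [nonpos_iff_eq_zero.1 ha]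
  | hs p k ih =>
    intro a ha
    have hcoord : ∀ i, a i ≤ k i + Finsupp.single p 1 i := fun i => ha i
    by_cases hp : a p = 0
    · refine ih a fun i => ?_
      by_cases hi : i = p
      · subst hi; simp [hp]
      · simpa [Finsupp.single_apply, Ne.symm hi] using hcoord i
    · have h1 : Finsupp.single p 1 ≤ a := by
        rw [Finsupp.single_le_iff]; omega
      rw [← tsub_add_cancel_of_le h1]
      refine hs p _ fun b hb => ih b (hb.trans ?_)
      exact tsub_le_iff_right.2 ha

/-- The Leibniz rule: forming Taylor series is multiplicative. -/
theorem taylorAt_mul {n : ℕ} {f g : (Fin n → ℝ) → ℝ} (hf : ContDiff ℝ (⊤ : ℕ∞) f)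
    (hg : ContDiff ℝ (⊤ : ℕ∞) g) (x : Fin n → ℝ) :
    taylorAt (f * g) x = taylorAt f x * taylorAt g x := by
  ext k
  induction k using multiIndex_induction generalizing f g with
  | h0 =>
    rw [coeff_zero_taylorAt, MvPowerSeries.coeff_mul]
    simp [coeff_zero_taylorAt]
  | hs p k ih =>
    have h1 : (k p + 1 : ℝ) ≠ 0 := by positivity
    have hfg : ContDiff ℝ (⊤ : ℕ∞) (f * g) := hf.mul hg
    have hfg₁ : ContDiff ℝ (⊤ : ℕ∞) (f * pd p g) := hf.mul (pd_contDiff p hg)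
    have hfg₂ : ContDiff ℝ (⊤ : ℕ∞) (g * pd p f) := hg.mul (pd_contDiff p hf)
    refine mul_right_cancel₀ h1 ?_
    rw [← MvPowerSeries.coeff_pderiv, ← MvPowerSeries.coeff_pderiv, pderiv_taylorAt p hfg,
      pd_mul p hf hg, taylorAt_add hfg₁ hfg₂,
      map_add, ih hf (pd_contDiff p hg), ih hg (pd_contDiff p hf), Derivation.leibniz,
      pderiv_taylorAt p hf, pderiv_taylorAt p hg, map_add, smul_eq_mul, smul_eq_mul]

theorem enorm_coeff_taylorAt_pd {n : ℕ} (p : Fin n) {f : (Fin n → ℝ) → ℝ}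
    (hf : ContDiff ℝ (⊤ : ℕ∞) f) (x : Fin n → ℝ) (k : Fin n →₀ ℕ) :
    ‖MvPowerSeries.coeff k (taylorAt (pd p f) x)‖ₑ
      = ‖MvPowerSeries.coeff (k + Finsupp.single p 1) (taylorAt f x)‖ₑ * (k p + 1) := by
  rw [← pderiv_taylorAt p hf, MvPowerSeries.coeff_pderiv, enorm_mul]
  congr 1
  rw [← Nat.cast_succ, ← Nat.cast_succ, Real.enorm_natCast]

theorem contDiff_finsetSum {n : ℕ} {ι : Type*} (s : Finset ι) (f : ι → (Fin n → ℝ) → ℝ)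
    (hf : ∀ i, ContDiff ℝ (⊤ : ℕ∞) (f i)) : ContDiff ℝ (⊤ : ℕ∞) (∑ i ∈ s, f i) := by
  classical
  induction s using Finset.induction_on with
  | empty => exact contDiff_const
  | insert a s ha ih => rw [Finset.sum_insert ha]; exact (hf a).add ih

theorem taylorAt_sum {n : ℕ} {ι : Type*} (s : Finset ι) (f : ι → (Fin n → ℝ) → ℝ)
    (hf : ∀ i, ContDiff ℝ (⊤ : ℕ∞) (f i)) (x : Fin n → ℝ) :
    taylorAt (∑ i ∈ s, f i) x = ∑ i ∈ s, taylorAt (f i) x := by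
  classical
  have h0 : taylorAt (0 : (Fin n → ℝ) → ℝ) x = 0 := by
    have h := taylorAt_add (f := 0) (g := 0) (n := n) contDiff_const contDiff_const x
    rw [add_zero] at h
    simpa using h
  induction s using Finset.induction_on with
  | empty => simpa using h0
  | insert a s ha ih =>
    rw [Finset.sum_insert ha, Finset.sum_insert ha, ← ih]
    exact taylorAt_add (hf a) (contDiff_finsetSum s f hf) x

/-! ### Faà di Bruno's formula as a majorisation -/

open scoped ENNReal

/-- The power rule for `W ^ ν`. When `ν j = 0` the truncated exponent `ν - e_j` is harmless, because of
the factor `ν j`. -/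
theorem pderiv_prod_pow {n m : ℕ} (p : Fin m) (W : Fin n → MvPowerSeries (Fin m) ℝ≥0∞)
    (ν : Fin n →₀ ℕ) :
    MvPowerSeries.pderiv ℝ≥0∞ p (∏ j, W j ^ ν j)
      = ∑ j, (ν j : MvPowerSeries (Fin m) ℝ≥0∞)
        * ((∏ i, W i ^ (ν - Finsupp.single j 1 : Fin n →₀ ℕ) i)
          * MvPowerSeries.pderiv ℝ≥0∞ p (W j)) := by
  have aux : ∀ (s : Finset (Fin n)) (f : Fin n → MvPowerSeries (Fin m) ℝ≥0∞),
      MvPowerSeries.pderiv ℝ≥0∞ p (∏ j ∈ s, f j)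
        = ∑ j ∈ s, (∏ i ∈ s.erase j, f i) * MvPowerSeries.pderiv ℝ≥0∞ p (f j) := by
    intro s f
    induction s using Finset.induction_on with
    | empty => simp
    | insert a s ha ih =>
      rw [Finset.prod_insert ha, Derivation.leibniz, ih, Finset.sum_insert ha,
        Finset.erase_insert ha, smul_eq_mul, smul_eq_mul, add_comm, Finset.mul_sum]
      congr 1
      refine Finset.sum_congr rfl fun j hj => ?_
      have hja : a ≠ j := fun h => ha (h ▸ hj)
      rw [Finset.erase_insert_of_ne hja, Finset.prod_insert (by simp [ha]), mul_assoc]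
  rw [aux]
  refine Finset.sum_congr rfl fun j _ => ?_
  rw [Derivation.leibniz_pow, ← Finset.mul_prod_erase _
    (fun i => W i ^ (ν - Finsupp.single j 1 : Fin n →₀ ℕ) i)
    (Finset.mem_univ j)]
  have : ∏ i ∈ Finset.univ.erase j, W i ^ (ν - Finsupp.single j 1 : Fin n →₀ ℕ) i
      = ∏ i ∈ Finset.univ.erase j, W i ^ ν i := by
    refine Finset.prod_congr rfl fun i hi => ?_
    simp [(Finset.ne_of_mem_erase hi).symm]
  rw [this]
  simp only [Finsupp.coe_tsub, Pi.sub_apply, Finsupp.single_eq_same, smul_eq_mul, nsmul_eq_mul]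
  ring

/-- The power series of absolute values of the Taylor coefficients of `f` at `x`, its constant term
replaced by `0`. -/
def majorant {n : ℕ} (f : (Fin n → ℝ) → ℝ) (x : Fin n → ℝ) : MvPowerSeries (Fin n) ℝ≥0∞ :=
  fun k => if k = 0 then 0 else ‖MvPowerSeries.coeff k (taylorAt f x)‖ₑ

theorem coeff_majorant {n : ℕ} (f : (Fin n → ℝ) → ℝ) (x : Fin n → ℝ) (k : Fin n →₀ ℕ) :
    MvPowerSeries.coeff k (majorant f x)
      = if k = 0 then 0 else ‖MvPowerSeries.coeff k (taylorAt f x)‖ₑ := rfl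

theorem coeff_pderiv_majorant {n : ℕ} (p : Fin n) {f : (Fin n → ℝ) → ℝ}
    (hf : ContDiff ℝ (⊤ : ℕ∞) f) (x : Fin n → ℝ) (k : Fin n →₀ ℕ) :
    MvPowerSeries.coeff k (MvPowerSeries.pderiv ℝ≥0∞ p (majorant f x))
      = ‖MvPowerSeries.coeff k (taylorAt (pd p f) x)‖ₑ := by
  rw [MvPowerSeries.coeff_pderiv, coeff_majorant, if_neg, enorm_coeff_taylorAt_pd p hf]
  intro h
  have := DFunLike.congr_fun h p
  simp at this

/-- Faà di Bruno's formula as a majorisation: the Taylor coefficients of `Y ∘ u` are dominated by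
those of the composite of the majorants, the constant terms `u j x` being absorbed in the base point
of the expansion of `Y`. Both sides obey the chain rule, so the induction runs over
the order of the coefficient, for all `Y` at once. -/
theorem faaDiBruno_majorant {n m : ℕ} {u : Fin n → (Fin m → ℝ) → ℝ}
    (hu : ∀ j, ContDiff ℝ (⊤ : ℕ∞) (u j)) (x : Fin m → ℝ) (k : Fin m →₀ ℕ)
    {Y : (Fin n → ℝ) → ℝ} (hY : ContDiff ℝ (⊤ : ℕ∞) Y) :
    ‖MvPowerSeries.coeff k (taylorAt (fun x => Y fun j => u j x) x)‖ₑ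
      ≤ ∑' ν : Fin n →₀ ℕ, ‖MvPowerSeries.coeff ν (taylorAt Y fun j => u j x)‖ₑ
        * MvPowerSeries.coeff k (∏ j, majorant (u j) x ^ ν j) := by
  have hcomp : ∀ {Y : (Fin n → ℝ) → ℝ}, ContDiff ℝ (⊤ : ℕ∞) Y →
      ContDiff ℝ (⊤ : ℕ∞) (fun x => Y fun j => u j x) :=
    fun hY => hY.comp (contDiff_pi.2 hu)
  induction k using multiIndex_strong_induction generalizing Y with
  | h0 =>
    refine le_trans (le_of_eq ?_) (ENNReal.le_tsum 0)
    simp [coeff_zero_taylorAt]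
  | hs p k ih =>
    set U : Fin n → ℝ := fun j => u j x with hU
    set W : Fin n → MvPowerSeries (Fin m) ℝ≥0∞ := fun j => majorant (u j) x with hW
    have hc0 : (k p + 1 : ℝ≥0∞) ≠ 0 := by simp
    have hc1 : (k p + 1 : ℝ≥0∞) ≠ ⊤ := by simp
    refine (ENNReal.mul_le_mul_iff_left hc0 hc1).1 ?_
    rw [← enorm_coeff_taylorAt_pd p (hcomp hY), pd_comp p hY hu,
      taylorAt_sum Finset.univ (fun j => (fun x => pd j Y fun i => u i x) * pd p (u j))
        (fun j => (hcomp (pd_contDiff j hY)).mul (pd_contDiff p (hu j))), map_sum]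
    -- The coefficients of the derivative of the composite, bounded by the induction hypothesis.
    have step : ∀ j, ‖MvPowerSeries.coeff k
          (taylorAt ((fun x => pd j Y fun i => u i x) * pd p (u j)) x)‖ₑ
        ≤ ∑' μ : Fin n →₀ ℕ, ‖MvPowerSeries.coeff μ (taylorAt (pd j Y) U)‖ₑ
          * MvPowerSeries.coeff k ((∏ i, W i ^ μ i) * MvPowerSeries.pderiv ℝ≥0∞ p (W j)) := by
      intro j
      rw [taylorAt_mul (hcomp (pd_contDiff j hY)) (pd_contDiff p (hu j)), MvPowerSeries.coeff_mul]
      refine (enorm_sum_le _ _).trans ?_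
      simp_rw [MvPowerSeries.coeff_mul, Finset.mul_sum]
      rw [Summable.tsum_finsetSum fun _ _ => ENNReal.summable]
      refine Finset.sum_le_sum fun ab hab => ?_
      rw [enorm_mul, coeff_pderiv_majorant p (hu j)]
      simp_rw [← mul_assoc]
      rw [ENNReal.tsum_mul_right]
      gcongr
      exact ih ab.1 (le_self_add.trans_eq (Finset.HasAntidiagonal.mem_antidiagonal.1 hab))
        (pd_contDiff j hY)
    refine (enorm_sum_le _ _).trans ((Finset.sum_le_sum fun j _ => step j).trans ?_)
    rw [← ENNReal.tsum_mul_right]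
    have reindex : ∀ ν : Fin n →₀ ℕ, ‖MvPowerSeries.coeff ν (taylorAt Y U)‖ₑ
          * MvPowerSeries.coeff (k + Finsupp.single p 1) (∏ j, W j ^ ν j) * (k p + 1)
        = ∑ j, ‖MvPowerSeries.coeff ν (taylorAt Y U)‖ₑ * (ν j * MvPowerSeries.coeff k
          ((∏ i, W i ^ (ν - Finsupp.single j 1 : Fin n →₀ ℕ) i) * MvPowerSeries.pderiv ℝ≥0∞ p (W j))) := by
      intro ν
      rw [mul_assoc, ← MvPowerSeries.coeff_pderiv, pderiv_prod_pow, map_sum, Finset.mul_sum]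
      refine Finset.sum_congr rfl fun j _ => ?_
      rw [← map_natCast (MvPowerSeries.C (σ := Fin m) (R := ℝ≥0∞)), MvPowerSeries.coeff_C_mul]
    refine le_of_le_of_eq ?_ (tsum_congr reindex).symm
    rw [Summable.tsum_finsetSum fun _ _ => ENNReal.summable]
    refine Finset.sum_le_sum fun j _ => ?_
    -- Multi-indices `ν = μ + e_j` suffice, as the others contribute zero.
    refine le_trans (le_of_eq ?_) (ENNReal.tsum_comp_le_tsum_of_injective
      (f := fun μ : Fin n →₀ ℕ => μ + Finsupp.single j 1) (add_left_injective _) _)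
    refine tsum_congr fun μ => ?_
    rw [enorm_coeff_taylorAt_pd j hY, add_tsub_cancel_right]
    simp
    ring

/-! ### Sums of coefficients of nonnegative power series -/

theorem tsum_coeff_mul {m : ℕ} (f g : MvPowerSeries (Fin m) ℝ≥0∞) :
    ∑' k, MvPowerSeries.coeff k (f * g)
      = (∑' k, MvPowerSeries.coeff k f) * ∑' k, MvPowerSeries.coeff k g := by
  simp_rw [MvPowerSeries.coeff_mul]
  rw [← ENNReal.tsum_mul_right]
  simp_rw [← ENNReal.tsum_mul_left]
  rw [← ENNReal.tsum_prod, ← Finset.HasAntidiagonal.sigmaAntidiagonalEquivProd.tsum_eq,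
    ENNReal.tsum_sigma']
  refine tsum_congr fun k => ?_
  rw [tsum_fintype, ← Finset.sum_finset_coe]
  rfl

theorem tsum_coeff_prod_pow {n m : ℕ} (w : Fin n → MvPowerSeries (Fin m) ℝ≥0∞)
    (ν : Fin n →₀ ℕ) :
    ∑' k, MvPowerSeries.coeff k (∏ j, w j ^ ν j)
      = ∏ j, (∑' k, MvPowerSeries.coeff k (w j)) ^ ν j := by
  have h1 : ∑' k, MvPowerSeries.coeff k (1 : MvPowerSeries (Fin m) ℝ≥0∞) = 1 := by
    classical
    simp_rw [MvPowerSeries.coeff_one]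
    exact tsum_ite_eq 0 _
  let φ : MvPowerSeries (Fin m) ℝ≥0∞ →* ℝ≥0∞ :=
    { toFun := fun f => ∑' k, MvPowerSeries.coeff k f
      map_one' := h1
      map_mul' := tsum_coeff_mul }
  change φ (∏ j, w j ^ ν j) = ∏ j, φ (w j) ^ ν j
  rw [map_prod]
  simp_rw [map_pow]

/-! ### Factorials of multi-indices -/

theorem factorial_mul_factorial_le {g S N : ℕ} (hg : g ≠ 0) (hN : N ≤ S) :
    (N + 1) * (g.factorial * S.factorial) ≤ (g + S).factorial := by
  obtain ⟨h, rfl⟩ := Nat.exists_eq_succ_of_ne_zero hg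
  clear hg
  induction h with
  | zero =>
    rw [Nat.succ_eq_add_one, zero_add, add_comm 1 S, Nat.factorial_succ S, Nat.factorial_one,
      one_mul]
    exact Nat.mul_le_mul_right _ (Nat.succ_le_succ hN)
  | succ h ih =>
    have e1 : (h + 1).succ.factorial = (h + 2) * h.succ.factorial := Nat.factorial_succ _
    have e2 : ((h + 1).succ + S).factorial = (h + 2 + S) * (h.succ + S).factorial := by
      rw [show (h + 1).succ + S = (h.succ + S) + 1 by omega, Nat.factorial_succ]
    rw [e1, e2]
    calc (N + 1) * ((h + 2) * h.succ.factorial * S.factorial)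
        = (h + 2) * ((N + 1) * (h.succ.factorial * S.factorial)) := by ring
      _ ≤ (h + 2 + S) * (h.succ + S).factorial := Nat.mul_le_mul (by omega) ih

theorem card_factorial_mul_prod_le {ι : Type*} (s : Finset ι) (g : ι → ℕ) :
    (s.filter fun i => g i ≠ 0).card.factorial * ∏ i ∈ s, (g i).factorial
      ≤ (∑ i ∈ s, g i).factorial := by
  classical
  induction s using Finset.induction_on with
  | empty => simp
  | insert a s ha ih =>
    rw [Finset.prod_insert ha, Finset.sum_insert ha, Finset.filter_insert]
    by_cases h : g a = 0
    · simpa [h] using ih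
    · rw [if_pos h, Finset.card_insert_of_notMem (by simp [ha]), Nat.factorial_succ]
      have hN : (s.filter fun i => g i ≠ 0).card ≤ ∑ i ∈ s, g i := by
        rw [Finset.card_eq_sum_ones, Finset.sum_filter]
        refine Finset.sum_le_sum fun i _ => ?_
        split_ifs with h0 <;> omega
      refine le_trans ?_ (factorial_mul_factorial_le h hN)
      calc _ = ((s.filter fun i => g i ≠ 0).card + 1) * ((g a).factorial *
            ((s.filter fun i => g i ≠ 0).card.factorial * ∏ i ∈ s, (g i).factorial)) := by ring
        _ ≤ _ := by gcongr

theorem factorial_sum_le {m : ℕ} (N : Fin m → ℕ) :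
    (∑ p, N p).factorial ≤ m ^ (∑ p, N p) * ∏ p, (N p).factorial := by
  rw [← Nat.multinomial_spec, mul_comm]
  gcongr
  have h := Finset.sum_pow_eq_sum_piAntidiag (Finset.univ : Finset (Fin m)) (fun _ => (1 : ℕ))
    (∑ p, N p)
  simp only [Finset.sum_const, Finset.card_univ, Fintype.card_fin, smul_eq_mul, mul_one, one_pow,
    Finset.prod_const_one, Nat.cast_id] at h
  rw [h]
  exact Finset.single_le_sum (f := fun k => Nat.multinomial Finset.univ k) (fun _ _ => Nat.zero_le _)
    (by simp)

/-- The combinatorial inequality behind the constant `m ^ (α - 1)`: each of the nonzero multi-indices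
`l i` is assigned to a coordinate in which it does not vanish, and the inequality is proved
separately in each coordinate. -/
theorem card_factorial_le {m : ℕ} {ι : Type*} [Fintype ι] (l : ι → Fin m →₀ ℕ)
    (hl : ∀ i, l i ≠ 0) :
    (Fintype.card ι).factorial * ∏ i, ∏ p, (l i p).factorial
      ≤ m ^ Fintype.card ι * ∏ p, (∑ i, l i p).factorial := by
  classical
  have hex : ∀ i, ∃ p, l i p ≠ 0 := fun i => Finsupp.ne_iff.1 (hl i)
  choose c hc using hex
  set N : Fin m → ℕ := fun p => (Finset.univ.filter fun i => c i = p).card with hN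
  have hcard : Fintype.card ι = ∑ p, N p := by
    rw [← Finset.card_univ]
    exact Finset.card_eq_sum_card_fiberwise (fun i _ => Finset.mem_coe.2 (Finset.mem_univ (c i)))
  rw [hcard, Finset.prod_comm]
  calc _ ≤ (m ^ (∑ p, N p) * ∏ p, (N p).factorial) * ∏ p, ∏ i, (l i p).factorial :=
        Nat.mul_le_mul_right _ (factorial_sum_le N)
    _ = m ^ (∑ p, N p) * ∏ p, ((N p).factorial * ∏ i, (l i p).factorial) := by
        rw [mul_assoc, Finset.prod_mul_distrib]
    _ ≤ _ := by
        gcongr with p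
        refine le_trans ?_ (card_factorial_mul_prod_le Finset.univ fun i => l i p)
        gcongr
        refine Finset.card_le_card fun i hi => ?_
        rw [Finset.mem_filter] at hi ⊢
        exact ⟨hi.1, hi.2 ▸ hc i⟩

/-! ### Gevrey weights -/

/-- The factor by which the `k`-th Taylor coefficient enters the Gevrey norm:
`(L^k / k!) ^ α = gevreyWeight α L k / k!`. -/
def gevreyWeight {m : ℕ} (α : ℝ) (L : Fin m → ℝ) (k : Fin m →₀ ℕ) : ℝ :=
  (∏ p, L p ^ k p) ^ α / (∏ p, (Nat.factorial (k p) : ℝ)) ^ (α - 1)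

theorem gevreyWeight_nonneg {m : ℕ} (α : ℝ) {L : Fin m → ℝ} (hL : ∀ p, 0 < L p)
    (k : Fin m →₀ ℕ) : 0 ≤ gevreyWeight α L k :=
  div_nonneg (Real.rpow_nonneg (Finset.prod_nonneg fun p _ => pow_nonneg (hL p).le _) _)
    (Real.rpow_nonneg (Finset.prod_nonneg fun p _ => by positivity) _)

theorem prod_factorial_pos {m : ℕ} (k : Fin m → ℕ) : (0 : ℝ) < ∏ p, (Nat.factorial (k p) : ℝ) :=
  Finset.prod_pos fun p _ => by positivity

theorem gevreyTerm_eq_weight {m : ℕ} (α : ℝ) {L : Fin m → ℝ} (hL : ∀ p, 0 < L p)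
    (K : Set (Fin m → ℝ)) (f : (Fin m → ℝ) → ℝ) (k : Fin m →₀ ℕ) :
    gevreyTerm α L K f k
      = gevreyWeight α L k * (supOn K (mpd k f) / ∏ p, (Nat.factorial (k p) : ℝ)) := by
  have hF := prod_factorial_pos (⇑k)
  unfold gevreyTerm gevreyWeight
  rw [Real.div_rpow (Finset.prod_nonneg fun p _ => pow_nonneg (hL p).le _) hF.le,
    Real.rpow_sub_one hF.ne']
  have : (∏ p, (Nat.factorial (k p) : ℝ)) ^ α ≠ 0 := (Real.rpow_pos_of_pos hF α).ne'
  field_simp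

/-- Near-submultiplicativity of the weights on nonzero multi-indices, `ν j` of which are labelled by
each `j`. -/
theorem gevreyWeight_sum_le {n m : ℕ} {α : ℝ} (hα : 1 < α) {L : Fin m → ℝ} (hL : ∀ p, 0 < L p)
    (ν : Fin n →₀ ℕ) (l : (Σ j, Fin (ν j)) → Fin m →₀ ℕ) (hl : ∀ i, l i ≠ 0) :
    gevreyWeight α L (∑ i, l i)
      ≤ ((m : ℝ) ^ (∑ j, ν j) / ∏ j, (Nat.factorial (ν j) : ℝ)) ^ (α - 1)
        * ∏ i, gevreyWeight α L (l i) := by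
  have hcomb := card_factorial_le l hl
  have hcard : Fintype.card (Σ j, Fin (ν j)) = ∑ j, ν j := by simp
  rw [hcard] at hcomb
  have hν : ∏ j, (ν j).factorial ≤ (∑ j, ν j).factorial :=
    Nat.le_of_dvd (Nat.factorial_pos _) (Nat.prod_factorial_dvd_factorial_sum _ _)
  have hnat := (Nat.mul_le_mul_right (∏ i, ∏ p, (l i p).factorial) hν).trans hcomb
  have hreal : (∏ j, (Nat.factorial (ν j) : ℝ)) * (∏ i, ∏ p, (Nat.factorial (l i p) : ℝ))
      ≤ (m : ℝ) ^ (∑ j, ν j) * ∏ p, (Nat.factorial ((∑ i, l i) p) : ℝ) := by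
    simp only [Finsupp.finsetSum_apply]
    exact_mod_cast hnat
  have hV := prod_factorial_pos (⇑ν)
  have hP := prod_factorial_pos (⇑(∑ i, l i))
  have hQ : 0 < ∏ i, ∏ p, (Nat.factorial (l i p) : ℝ) :=
    Finset.prod_pos fun i _ => prod_factorial_pos (⇑(l i))
  have hA : (∏ p, L p ^ (∑ i, l i) p) = ∏ i, ∏ p, L p ^ l i p := by
    rw [Finset.prod_comm]
    refine Finset.prod_congr rfl fun p _ => ?_
    rw [Finsupp.finsetSum_apply, Finset.prod_pow_eq_pow_sum]
  have hA0 : ∀ i, 0 ≤ ∏ p, L p ^ l i p := fun i =>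
    Finset.prod_nonneg fun p _ => pow_nonneg (hL p).le _
  unfold gevreyWeight
  rw [hA, Finset.prod_div_distrib, Real.finsetProd_rpow _ _ (fun i _ => hA0 i),
    Real.finsetProd_rpow _ _ (fun i _ => (prod_factorial_pos (⇑(l i))).le)]
  have hM : (0 : ℝ) ≤ (m : ℝ) ^ (∑ j, ν j) := by positivity
  set V := ∏ j, (Nat.factorial (ν j) : ℝ)
  set P := ∏ p, (Nat.factorial ((∑ i, l i) p) : ℝ)
  set Q := ∏ i, ∏ p, (Nat.factorial (l i p) : ℝ)
  set A := ∏ i, ∏ p, L p ^ l i p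
  set M := (m : ℝ) ^ (∑ j, ν j)
  have hA1 : 0 ≤ A := Finset.prod_nonneg fun i _ => hA0 i
  have hα' : 0 ≤ α - 1 := by linarith
  have h1 : Q ≤ (M / V) * P := by
    rw [div_mul_eq_mul_div, le_div_iff₀ hV]
    linarith
  have h2 := Real.rpow_le_rpow hQ.le h1 hα'
  rw [Real.mul_rpow (by positivity) hP.le] at h2
  rw [mul_div_assoc', div_le_div_iff₀ (by positivity) (by positivity)]
  calc A ^ α * Q ^ (α - 1) ≤ A ^ α * ((M / V) ^ (α - 1) * P ^ (α - 1)) := by gcongr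
    _ = _ := by ring

/-- Weighting the coefficients of `∏ j, W j ^ ν j` amounts to weighting those of each factor, up to
`(m ^ |ν| / ν!) ^ (α - 1)`. The vanishing constant terms are needed: only then does each of the
`|ν|` factors contribute a nonzero multi-index. -/
theorem weighted_coeff_le {n m : ℕ} {α : ℝ} (hα : 1 < α) {L : Fin m → ℝ} (hL : ∀ p, 0 < L p)
    (W w : Fin n → MvPowerSeries (Fin m) ℝ≥0∞) (hW0 : ∀ j, MvPowerSeries.coeff 0 (W j) = 0)
    (hWw : ∀ j l, l ≠ 0 → ENNReal.ofReal (gevreyWeight α L l) * MvPowerSeries.coeff l (W j)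
      ≤ MvPowerSeries.coeff l (w j))
    (ν : Fin n →₀ ℕ) (k : Fin m →₀ ℕ) :
    ENNReal.ofReal (gevreyWeight α L k) * MvPowerSeries.coeff k (∏ j, W j ^ ν j)
      ≤ ENNReal.ofReal (((m : ℝ) ^ (∑ j, ν j) / ∏ j, (Nat.factorial (ν j) : ℝ)) ^ (α - 1))
        * MvPowerSeries.coeff k (∏ j, w j ^ ν j) := by
  classical
  have hprod : ∀ v : Fin n → MvPowerSeries (Fin m) ℝ≥0∞,
      ∏ j, v j ^ ν j = ∏ i : (Σ j, Fin (ν j)), v i.1 := by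
    intro v
    rw [← Finset.univ_sigma_univ, Finset.prod_sigma]
    simp
  rw [hprod, hprod, MvPowerSeries.coeff_prod, MvPowerSeries.coeff_prod, Finset.mul_sum,
    Finset.mul_sum]
  refine Finset.sum_le_sum fun l hlk => ?_
  have hk : ∑ i, l i = k := (Finset.mem_finsuppAntidiag.1 hlk).1
  by_cases hl : ∀ i, l i ≠ 0
  · rw [← hk]
    calc _ ≤ ENNReal.ofReal
            (((m : ℝ) ^ (∑ j, ν j) / ∏ j, (Nat.factorial (ν j) : ℝ)) ^ (α - 1)
              * ∏ i, gevreyWeight α L (l i)) * ∏ i, MvPowerSeries.coeff (l i) (W i.1) := by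
          gcongr
          exact gevreyWeight_sum_le hα hL ν (⇑l) hl
      _ = ENNReal.ofReal (((m : ℝ) ^ (∑ j, ν j) / ∏ j, (Nat.factorial (ν j) : ℝ)) ^ (α - 1))
            * ∏ i, (ENNReal.ofReal (gevreyWeight α L (l i))
              * MvPowerSeries.coeff (l i) (W i.1)) := by
          rw [ENNReal.ofReal_mul (Real.rpow_nonneg (by positivity) _),
            ENNReal.ofReal_prod_of_nonneg fun i _ => gevreyWeight_nonneg α hL _, mul_assoc,
            Finset.prod_mul_distrib]
      _ ≤ _ := by
          gcongr with i
          exact hWw _ _ (hl i)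
  · push Not at hl
    obtain ⟨i, hi⟩ := hl
    rw [Finset.prod_eq_zero (Finset.mem_univ i) (by rw [hi, hW0]), mul_zero]
    exact zero_le

theorem supOn_nonneg {n : ℕ} (K : Set (Fin n → ℝ)) (f : (Fin n → ℝ) → ℝ) : 0 ≤ supOn K f :=
  Real.sSup_nonneg (by rintro _ ⟨x, _, rfl⟩; exact norm_nonneg _)

theorem norm_le_supOn {n : ℕ} {K : Set (Fin n → ℝ)} (hK : IsCompact K) {f : (Fin n → ℝ) → ℝ}
    (hf : Continuous f) {x : Fin n → ℝ} (hx : x ∈ K) : ‖f x‖ ≤ supOn K f :=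
  le_csSup (hK.image hf.norm).bddAbove (Set.mem_image_of_mem _ hx)

theorem gevreyTerm_nonneg {n : ℕ} (α : ℝ) {L : Fin n → ℝ} (hL : ∀ p, 0 < L p)
    (K : Set (Fin n → ℝ)) (f : (Fin n → ℝ) → ℝ) (k : Fin n → ℕ) : 0 ≤ gevreyTerm α L K f k :=
  mul_nonneg (Real.rpow_nonneg (div_nonneg (Finset.prod_nonneg fun p _ => pow_nonneg (hL p).le _)
    (prod_factorial_pos k).le) _) (supOn_nonneg _ _)

theorem gevreyTerm_zero {n : ℕ} (α : ℝ) (L : Fin n → ℝ)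
    (K : Set (Fin n → ℝ)) (f : (Fin n → ℝ) → ℝ) : gevreyTerm α L K f 0 = supOn K f := by
  unfold gevreyTerm
  rw [mpd_zero]
  simp

theorem enorm_coeff_taylorAt {n : ℕ} (f : (Fin n → ℝ) → ℝ) (x : Fin n → ℝ) (k : Fin n →₀ ℕ) :
    ‖MvPowerSeries.coeff k (taylorAt f x)‖ₑ
      = ENNReal.ofReal (‖mpd k f x‖ / ∏ j, (Nat.factorial (k j) : ℝ)) := by
  rw [coeff_taylorAt, ← ofReal_norm, norm_div, Real.norm_of_nonneg
    (prod_factorial_pos (⇑k)).le]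

/-- The power series whose coefficients are the terms of the Gevrey norm of `f`, the term of order
zero being replaced by `0`. -/
def gevreySeries {m : ℕ} (α : ℝ) (L : Fin m → ℝ) (K : Set (Fin m → ℝ))
    (f : (Fin m → ℝ) → ℝ) : MvPowerSeries (Fin m) ℝ≥0∞ :=
  fun k => if k = 0 then 0 else ENNReal.ofReal (gevreyTerm α L K f k)

theorem coeff_gevreySeries {m : ℕ} (α : ℝ) (L : Fin m → ℝ) (K : Set (Fin m → ℝ))
    (f : (Fin m → ℝ) → ℝ) (k : Fin m →₀ ℕ) :
    MvPowerSeries.coeff k (gevreySeries α L K f)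
      = if k = 0 then 0 else ENNReal.ofReal (gevreyTerm α L K f k) := rfl

theorem tsum_gevreySeries {m : ℕ} (α : ℝ) {L : Fin m → ℝ} (hL : ∀ p, 0 < L p)
    (K : Set (Fin m → ℝ)) {f : (Fin m → ℝ) → ℝ} (hf : Summable (gevreyTerm α L K f)) :
    ∑' k, MvPowerSeries.coeff k (gevreySeries α L K f)
      = ENNReal.ofReal ((∑' k, gevreyTerm α L K f k) - supOn K f) := by
  classical
  have h1 := hf.tsum_eq_add_tsum_ite 0
  rw [gevreyTerm_zero] at h1
  have hs : Summable fun k => if k = 0 then 0 else gevreyTerm α L K f k := by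
    refine Summable.of_nonneg_of_le (fun k => ?_) (fun k => ?_) hf
    · split_ifs
      exacts [le_rfl, gevreyTerm_nonneg α hL K f k]
    · split_ifs
      exacts [gevreyTerm_nonneg α hL K f k, le_rfl]
  rw [h1, add_sub_cancel_left, ENNReal.ofReal_tsum_of_nonneg _ hs,
    ← Finsupp.equivFunOnFinite.tsum_eq]
  · refine tsum_congr fun k => ?_
    rw [coeff_gevreySeries, show Finsupp.equivFunOnFinite k = ⇑k from rfl]
    by_cases hk : k = 0
    · simp [hk]
    · rw [if_neg hk, if_neg (by simpa using hk)]
  · intro k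
    split_ifs
    exacts [le_rfl, gevreyTerm_nonneg α hL K f k]

/-- The majorisation with Gevrey weights. The right-hand side does not depend on a point of `K₁`, so
it bounds the supremum that enters the Gevrey term of the composite. -/
theorem gevreyTerm_comp_le {n m : ℕ} {α : ℝ} (hα : 1 < α)
    {K : Set (Fin n → ℝ)} (hK : IsCompact K)
    {K₁ : Set (Fin m → ℝ)} (hK₁ : IsCompact K₁) (hK₁n : K₁.Nonempty)
    {Lv : Fin m → ℝ} (hLv : ∀ i, 0 < Lv i)
    {Y : (Fin n → ℝ) → ℝ} (hY : ContDiff ℝ (⊤ : ℕ∞) Y)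
    {u : Fin n → (Fin m → ℝ) → ℝ} (hu : ∀ j, ContDiff ℝ (⊤ : ℕ∞) (u j))
    (hmap : ∀ x ∈ K₁, (fun j => u j x) ∈ K) (k : Fin m →₀ ℕ) :
    ENNReal.ofReal (gevreyTerm α Lv K₁ (fun x => Y fun j => u j x) k)
      ≤ ∑' ν : Fin n →₀ ℕ,
        ENNReal.ofReal (supOn K (mpd ν Y) / ∏ j, (Nat.factorial (ν j) : ℝ))
        * (ENNReal.ofReal (((m : ℝ) ^ (∑ j, ν j) / ∏ j, (Nat.factorial (ν j) : ℝ)) ^ (α - 1))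
        * MvPowerSeries.coeff k (∏ j, gevreySeries α Lv K₁ (u j) ^ ν j)) := by
  have hcomp : ContDiff ℝ (⊤ : ℕ∞) (fun x => Y fun j => u j x) := hY.comp (contDiff_pi.2 hu)
  -- The supremum defining the left-hand side is attained at some point `x`.
  obtain ⟨x, hx, hsup⟩ := hK₁.exists_sSup_image_eq hK₁n
    (mpd_contDiff k hcomp).continuous.norm.continuousOn
  rw [gevreyTerm_eq_weight α hLv]
  have hsup' : supOn K₁ (mpd k fun x => Y fun j => u j x)
      = ‖mpd k (fun x => Y fun j => u j x) x‖ := hsup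
  rw [hsup', ENNReal.ofReal_mul (gevreyWeight_nonneg α hLv k), ← enorm_coeff_taylorAt]
  refine (mul_le_mul_right (faaDiBruno_majorant hu x k hY) _).trans ?_
  rw [← ENNReal.tsum_mul_left]
  refine ENNReal.tsum_le_tsum fun ν => ?_
  rw [mul_left_comm]
  refine mul_le_mul' ?_ (weighted_coeff_le hα hLv _ _ (fun j => ?_) (fun j l hl => ?_) ν k)
  · rw [enorm_coeff_taylorAt]
    have := prod_factorial_pos (⇑ν)
    gcongr
    exact norm_le_supOn hK (mpd_contDiff ν hY).continuous (hmap x hx)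
  · rw [coeff_majorant, if_pos rfl]
  · rw [coeff_majorant, coeff_gevreySeries, if_neg hl, if_neg hl, gevreyTerm_eq_weight α hLv,
      ENNReal.ofReal_mul (gevreyWeight_nonneg α hLv l), enorm_coeff_taylorAt]
    have := prod_factorial_pos (⇑l)
    gcongr
    exact norm_le_supOn hK₁ (mpd_contDiff l (hu j)).continuous hx

/-- The powers of `m` and of `ν!` recombine into the Gevrey term of `Y`. -/
theorem gevreyTerm_recombine {n m : ℕ} (hm : 1 ≤ m) {α L : ℝ} (hL : 0 < L)
    (K : Set (Fin n → ℝ)) (Y : (Fin n → ℝ) → ℝ) (ν : Fin n →₀ ℕ) :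
    supOn K (mpd ν Y) / (∏ j, (Nat.factorial (ν j) : ℝ))
      * (((m : ℝ) ^ (∑ j, ν j) / ∏ j, (Nat.factorial (ν j) : ℝ)) ^ (α - 1)
      * ∏ j, (L ^ α / (m : ℝ) ^ (α - 1)) ^ ν j) = gevreyTerm α (fun _ => L) K Y ν := by
  have hm0 : (0 : ℝ) < m := by exact_mod_cast hm
  have hF := prod_factorial_pos (⇑ν)
  rw [gevreyTerm_eq_weight α (fun _ => hL)]
  unfold gevreyWeight
  rw [Finset.prod_pow_eq_pow_sum, Finset.prod_pow_eq_pow_sum, div_pow,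
    Real.div_rpow (by positivity) hF.le]
  have e1 : (L ^ α) ^ (∑ j, ν j) = (L ^ (∑ j, ν j)) ^ α := Real.rpow_pow_comm hL.le _ _
  have e2 : ((m : ℝ) ^ (α - 1)) ^ (∑ j, ν j) = ((m : ℝ) ^ (∑ j, ν j)) ^ (α - 1) :=
    Real.rpow_pow_comm hm0.le _ _
  rw [e1, e2]
  have h1 : ((m : ℝ) ^ (∑ j, ν j)) ^ (α - 1) ≠ 0 := (Real.rpow_pos_of_pos (by positivity) _).ne'
  have h2 : (∏ j, (Nat.factorial (ν j) : ℝ)) ^ (α - 1) ≠ 0 := (Real.rpow_pos_of_pos hF _).ne'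
  field_simp

/-- composition of Gevrey functions. -/
theorem gevrey_composition {n m : ℕ} (hn : 1 ≤ n) (hm : 1 ≤ m)
    {α : ℝ} (hα : 1 < α) {L : ℝ} (hL : 0 < L)
    (a b : Fin n → ℝ) (hab : ∀ i, a i ≤ b i)
    (a₁ b₁ : Fin m → ℝ) (hab₁ : ∀ i, a₁ i ≤ b₁ i)
    (K : Set (Fin n → ℝ)) (hKdef : K = Set.pi Set.univ fun i => Set.Icc (a i) (b i))
    (K₁ : Set (Fin m → ℝ)) (hK₁def : K₁ = Set.pi Set.univ fun i => Set.Icc (a₁ i) (b₁ i))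
    (Lv : Fin m → ℝ) (hLv : ∀ i, 0 < Lv i)
    (Y : (Fin n → ℝ) → ℝ) (hYs : ContDiff ℝ (⊤ : ℕ∞) Y)
    (hY : Summable (gevreyTerm α (fun _ => L) K Y))
    (u : Fin n → (Fin m → ℝ) → ℝ) (hus : ∀ j, ContDiff ℝ (⊤ : ℕ∞) (u j))
    (hu : ∀ j, Summable (gevreyTerm α Lv K₁ (u j)))
    (hmap : ∀ x ∈ K₁, (fun j => u j x) ∈ K)
    (hsmall : ∀ j, (∑' k, gevreyTerm α Lv K₁ (u j) k) - supOn K₁ (u j)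
      ≤ L ^ α / (m : ℝ) ^ (α - 1)) :
    Summable (gevreyTerm α Lv K₁ (fun x => Y fun j => u j x)) ∧
      ∑' k, gevreyTerm α Lv K₁ (fun x => Y fun j => u j x) k ≤
        ∑' k, gevreyTerm α (fun _ => L) K Y k := by
  have hK : IsCompact K := hKdef ▸ isCompact_univ_pi fun i => isCompact_Icc
  have hK₁ : IsCompact K₁ := hK₁def ▸ isCompact_univ_pi fun i => isCompact_Icc
  have hK₁n : K₁.Nonempty := ⟨a₁, by rw [hK₁def]; exact fun i _ => ⟨le_rfl, hab₁ i⟩⟩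
  set g := gevreyTerm α Lv K₁ (fun x => Y fun j => u j x) with hg
  have hg0 : ∀ k, 0 ≤ g k := gevreyTerm_nonneg α hLv _ _
  have hY0 : ∀ ν, 0 ≤ gevreyTerm α (fun _ => L) K Y ν := gevreyTerm_nonneg α (fun _ => hL) _ _
  have main : ∑' k, ENNReal.ofReal (g k)
      ≤ ENNReal.ofReal (∑' ν, gevreyTerm α (fun _ => L) K Y ν) := by
    rw [ENNReal.ofReal_tsum_of_nonneg hY0 hY, ← Finsupp.equivFunOnFinite.tsum_eq,
      ← Finsupp.equivFunOnFinite.tsum_eq]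
    refine (ENNReal.tsum_le_tsum fun k =>
      gevreyTerm_comp_le hα hK hK₁ hK₁n hLv hYs hus hmap k).trans ?_
    rw [ENNReal.tsum_comm]
    refine ENNReal.tsum_le_tsum fun ν => ?_
    rw [ENNReal.tsum_mul_left, ENNReal.tsum_mul_left, tsum_coeff_prod_pow,
      show Finsupp.equivFunOnFinite ν = ⇑ν from rfl, ← gevreyTerm_recombine hm hL K Y ν,
      ENNReal.ofReal_mul (div_nonneg (supOn_nonneg _ _) (prod_factorial_pos (⇑ν)).le),
      ENNReal.ofReal_mul (Real.rpow_nonneg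
        (div_nonneg (by positivity) (prod_factorial_pos (⇑ν)).le) _),
      ENNReal.ofReal_prod_of_nonneg fun j _ => by positivity]
    gcongr with j
    rw [ENNReal.ofReal_pow (by positivity), tsum_gevreySeries α hLv K₁ (hu j)]
    gcongr
    exact hsmall j
  have hfin : ∀ s : Finset (Fin m → ℕ),
      ∑ k ∈ s, g k ≤ ∑' ν, gevreyTerm α (fun _ => L) K Y ν := by
    intro s
    refine (ENNReal.ofReal_le_ofReal_iff (tsum_nonneg hY0)).1 ?_
    rw [ENNReal.ofReal_sum_of_nonneg fun k _ => hg0 k]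
    exact (ENNReal.sum_le_tsum s).trans main
  have hsum : Summable g := summable_of_sum_le hg0 hfin
  exact ⟨hsum, hsum.tsum_le_of_sum_le hfin⟩
end
end

section
/- Let α>1 and d≥1. There exists a constant C_{α,d}>0, depending only on α and d, such that for every L>0, every 0<ε<1, every 0<δ≤1, and every smooth 2π-periodic function f:ℝ^d→ℂ with ‖f‖_{α,L}<∞, one has ‖f‖_{𝓕_{α,(1−ε)L−δ}} ≤ C_{α,d} · ε^{−(α−1)d} · δ^{−αd} · ‖f‖_{α,L}. -/
/-!
For smooth periodic `f`, integration by parts gives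
`∏ j, |k_j| ^ m_j * |f̂(k)| ≤ sup |∂^m f|` (`prod_abs_pow_mul_fourierCoef_le`); the boundary terms
vanish by the divergence theorem on the box together with periodicity (`integral_pd_eq_zero`).
Multiplying by `(L ^ |m| / m!) ^ α` and summing over `m` yields
`|f̂(k)| * ∏ j, Φ (L |k_j| ^ (1 / α)) ≤ ‖f‖_{α,L}`, where `Φ t = ∑ n, (t ^ n / n!) ^ α`.

Hölder's inequality with geometric weights `(1 - ε) ^ n`, of total mass `1 / ε`, gives
`exp (α (1 - ε) t) ≤ ε ^ (-(α - 1)) * Φ t`. It is used for partial sums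
(`exp_partial_sum_rpow_le`), so that summability of `Φ` plays no role, and the limit is taken in
`exp_mul_fourierCoef_le`:
`exp (α (1 - ε) L |k|_α) * |f̂(k)| ≤ ε ^ (-(α - 1) d) * ‖f‖_{α,L}`.

It remains to sum `exp (-α δ |k|_α)` over the lattice. This sum is the `d`-th power of a sum over `ℤ`,
which by comparison with `∫₀^∞ exp (-α δ x ^ (1 / α)) dx = (α δ) ^ (-α) Γ(α + 1)` is at most
`(1 + 2 Γ(α + 1)) δ ^ (-α)` (`sum_int_exp_le`, `sum_lattice_exp_le`).
Hence `C = (1 + 2 Γ(α + 1)) ^ d` works.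
-/

open scoped BigOperators
open MeasureTheory

noncomputable section

/-- The fundamental domain `[0,2π]^d`. -/
def box2pi (d : ℕ) : Set (Fin d → ℝ) := Set.pi Set.univ fun _ => Set.Icc 0 (2 * Real.pi)

/-- The Fourier coefficient `f̂(k)`. -/
def fourierCoef {d : ℕ} (f : (Fin d → ℝ) → ℂ) (k : Fin d → ℤ) : ℂ :=
  ((2 * Real.pi) ^ d : ℝ)⁻¹ •
    ∫ x in box2pi d, f x * Complex.exp (-(Complex.I * ∑ j, (k j : ℂ) * (x j : ℂ)))

/-! ### Fourier coefficients of derivatives -/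

lemma box2pi_eq_Icc (d : ℕ) : box2pi d = Set.Icc 0 (fun _ => 2 * Real.pi) := by
  ext x; simp [box2pi, Pi.le_def]

lemma isCompact_box2pi (d : ℕ) : IsCompact (box2pi d) := by
  rw [box2pi_eq_Icc]; exact isCompact_Icc

lemma volume_box2pi (d : ℕ) : volume.real (box2pi d) = (2 * Real.pi) ^ d := by
  rw [box2pi_eq_Icc, Measure.real, Real.volume_Icc_pi_toReal]
  · simp
  · intro i; simp [Real.pi_pos.le]

/-- `2π`-periodicity in each coordinate. -/
def IsPer {d : ℕ} (f : (Fin d → ℝ) → ℂ) : Prop :=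
  ∀ (x : Fin d → ℝ) (j : Fin d), f (x + (2 * Real.pi) • (Pi.single j 1 : Fin d → ℝ)) = f x

lemma ContDiff.pd_top {d : ℕ} {f : (Fin d → ℝ) → ℂ} (hf : ContDiff ℝ (⊤ : ℕ∞) f) (j : Fin d) :
    ContDiff ℝ (⊤ : ℕ∞) (pd j f) := by
  unfold pd
  exact (hf.fderiv_right (by simp)).clm_apply contDiff_const

lemma IsPer.pd {d : ℕ} {f : (Fin d → ℝ) → ℂ} (hp : IsPer f) (j : Fin d) : IsPer (pd j f) := by
  intro x i
  unfold _root_.pd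
  rw [← fderiv_comp_add_right]
  have : (fun y => f (y + (2 * Real.pi) • (Pi.single i 1 : Fin d → ℝ))) = f := funext fun y => hp y i
  rw [this]

/-- The divergence theorem on the box: the two faces orthogonal to `e_j` cancel by periodicity. -/
lemma integral_pd_eq_zero {d : ℕ} {g : (Fin d → ℝ) → ℂ} (hg : ContDiff ℝ (⊤ : ℕ∞) g)
    (hp : IsPer g) (j : Fin d) : ∫ x in box2pi d, pd j g x = 0 := by
  obtain _ | n := d
  · exact j.elim0
  rw [box2pi_eq_Icc]
  have h0 : (0 : Fin (n + 1) → ℝ) ≤ fun _ => 2 * Real.pi := fun i => by simp [Real.pi_pos.le]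
  have hsum : ∀ x, (∑ i, (if i = j then fderiv ℝ g x else 0) (Pi.single i 1)) = pd j g x := by
    intro x
    rw [Finset.sum_eq_single j]
    · simp [pd]
    · intro i _ hi; simp [hi]
    · simp
  have key := integral_divergence_of_hasFDerivAt_off_countable' 0 (fun _ => 2 * Real.pi) h0
    (fun i => if i = j then g else 0) (fun i x => if i = j then fderiv ℝ g x else 0) ∅
    Set.countable_empty ?_ ?_ ?_
  · simp only [hsum] at key
    rw [key]
    refine Finset.sum_eq_zero fun i _ => ?_
    by_cases hi : i = j
    · subst hi
      rw [sub_eq_zero]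
      refine setIntegral_congr_fun measurableSet_Icc fun x _ => ?_
      simp only [if_true]
      refine Eq.trans ?_ (hp _ i)
      congr 1
      ext l
      rcases Fin.eq_self_or_eq_succAbove i l with rfl | ⟨l, rfl⟩ <;> simp
    · simp [hi]
  · intro i
    by_cases hi : i = j
    · simpa [hi] using hg.continuous.continuousOn
    · rw [if_neg hi]; exact continuousOn_const
  · intro x _ i
    by_cases hi : i = j
    · simpa [hi] using (hg.differentiable (by simp) x).hasFDerivAt
    · rw [if_neg hi, if_neg hi]; exact hasFDerivAt_const (0 : ℂ) x
  · simp only [hsum]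
    exact ((hg.pd_top j).continuous.continuousOn).integrableOn_compact isCompact_Icc

/-- The linear form `x ↦ -i k·x`. -/
def phase {d : ℕ} (k : Fin d → ℤ) : (Fin d → ℝ) →L[ℝ] ℂ :=
  ∑ j, (-(Complex.I * k j)) • (Complex.ofRealCLM ∘L ContinuousLinearMap.proj j)

lemma phase_apply {d : ℕ} (k : Fin d → ℤ) (x : Fin d → ℝ) :
    phase k x = -(Complex.I * ∑ j, (k j : ℂ) * (x j : ℂ)) := by
  simp [phase, Finset.mul_sum, mul_assoc]

lemma phase_single {d : ℕ} (k : Fin d → ℤ) (j : Fin d) :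
    phase k (Pi.single j 1) = -(Complex.I * k j) := by
  rw [phase_apply, Finset.sum_eq_single j]
  · simp
  · intro i _ hi; simp [hi]
  · simp

lemma fourierCoef_eq {d : ℕ} (f : (Fin d → ℝ) → ℂ) (k : Fin d → ℤ) :
    fourierCoef f k = ((2 * Real.pi) ^ d : ℝ)⁻¹ •
      ∫ x in box2pi d, f x * Complex.exp (phase k x) := by
  simp only [fourierCoef, phase_apply]

/-- Integration by parts on the torus. -/
lemma fourierCoef_pd {d : ℕ} {f : (Fin d → ℝ) → ℂ} (hf : ContDiff ℝ (⊤ : ℕ∞) f)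
    (hp : IsPer f) (j : Fin d) (k : Fin d → ℤ) :
    fourierCoef (pd j f) k = (Complex.I * k j) * fourierCoef f k := by
  have he : ContDiff ℝ (⊤ : ℕ∞) (fun x => Complex.exp (phase k x)) := (phase k).contDiff.cexp
  have hper : IsPer fun x => f x * Complex.exp (phase k x) := by
    intro x i
    have h1 : Complex.exp ((2 * Real.pi : ℝ) • -(Complex.I * k i)) = 1 := by
      rw [Complex.exp_eq_one_iff]
      exact ⟨-(k i), by push_cast [Complex.real_smul]; ring⟩
    simp only [hp x i, map_add, map_smul, phase_single, Complex.exp_add, h1, mul_one]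
  have h0 := integral_pd_eq_zero (hf.mul he) hper j
  have hpd : ∀ x, pd j (fun x => f x * Complex.exp (phase k x)) x =
      pd j f x * Complex.exp (phase k x) -
        (Complex.I * k j) * (f x * Complex.exp (phase k x)) := by
    intro x
    have := ((hf.differentiable (by simp) x).hasFDerivAt.mul ((phase k).hasFDerivAt (x := x)).cexp)
    unfold pd
    rw [show (fun x => f x * Complex.exp (phase k x)) =
      f * fun x => Complex.exp (phase k x) from rfl, this.fderiv]
    simp [phase_single]
    ring
  simp only [hpd] at h0
  have hint : ∀ {g : (Fin d → ℝ) → ℂ}, Continuous g → IntegrableOn g (box2pi d) := fun hg =>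
    hg.continuousOn.integrableOn_compact (isCompact_box2pi d)
  rw [integral_sub, sub_eq_zero, integral_const_mul] at h0
  · rw [fourierCoef_eq, fourierCoef_eq, h0, mul_smul_comm]
  · exact hint ((hf.pd_top j).continuous.mul he.continuous)
  · exact hint (continuous_const.mul (hf.continuous.mul he.continuous))

lemma iterate_pd {d : ℕ} {f : (Fin d → ℝ) → ℂ} (hf : ContDiff ℝ (⊤ : ℕ∞) f)
    (hp : IsPer f) (j : Fin d) (k : Fin d → ℤ) (n : ℕ) :
    ContDiff ℝ (⊤ : ℕ∞) ((pd j)^[n] f) ∧ IsPer ((pd j)^[n] f) ∧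
      fourierCoef ((pd j)^[n] f) k = (Complex.I * k j) ^ n * fourierCoef f k := by
  induction n with
  | zero => simp [hf, hp]
  | succ n ih =>
    obtain ⟨h1, h2, h3⟩ := ih
    rw [Function.iterate_succ_apply']
    exact ⟨h1.pd_top j, h2.pd j, by rw [fourierCoef_pd h1 h2, h3]; ring⟩

lemma fourierCoef_mpd {d : ℕ} {f : (Fin d → ℝ) → ℂ} (hf : ContDiff ℝ (⊤ : ℕ∞) f)
    (hp : IsPer f) (k : Fin d → ℤ) (m : Fin d → ℕ) :
    ContDiff ℝ (⊤ : ℕ∞) (mpd m f) ∧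
      fourierCoef (mpd m f) k = (∏ j, (Complex.I * k j) ^ m j) * fourierCoef f k := by
  -- The multiplier formula for a partial fold over any list of directions.
  have H : ∀ l : List (Fin d),
      ContDiff ℝ (⊤ : ℕ∞) (l.foldr (fun j ψ => (pd j)^[m j] ψ) f) ∧
      IsPer (l.foldr (fun j ψ => (pd j)^[m j] ψ) f) ∧
      fourierCoef (l.foldr (fun j ψ => (pd j)^[m j] ψ) f) k =
        (l.map fun j => (Complex.I * k j) ^ m j).prod * fourierCoef f k := by
    intro l
    induction l with
    | nil => simp [hf, hp]
    | cons j l ih =>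
      obtain ⟨h1, h2, h3⟩ := ih
      obtain ⟨g1, g2, g3⟩ := iterate_pd h1 h2 j k (m j)
      refine ⟨g1, g2, ?_⟩
      rw [List.foldr_cons, g3, h3, List.map_cons, List.prod_cons, mul_assoc]
  obtain ⟨h1, -, h3⟩ := H (List.finRange d)
  refine ⟨h1, ?_⟩
  rw [← List.ofFn_eq_map, List.prod_ofFn] at h3
  exact h3

lemma norm_fourierCoef_le {d : ℕ} {g : (Fin d → ℝ) → ℂ} (hg : Continuous g) (k : Fin d → ℤ) :
    ‖fourierCoef g k‖ ≤ supOn (box2pi d) g := by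
  have hpos : 0 < (2 * Real.pi) ^ d := by positivity
  rw [fourierCoef_eq, norm_smul, norm_inv, Real.norm_of_nonneg hpos.le, inv_mul_le_iff₀ hpos,
    mul_comm, ← volume_box2pi]
  refine norm_setIntegral_le_of_norm_le_const (isCompact_box2pi d).measure_lt_top fun x hx => ?_
  have h1 : ‖Complex.exp (phase k x)‖ = 1 := by
    rw [Complex.norm_exp, phase_apply]
    simp [Complex.mul_re, ← Complex.ofReal_intCast, ← Complex.ofReal_mul, ← Complex.ofReal_sum]
  rw [norm_mul, h1, mul_one]
  exact le_csSup ((isCompact_box2pi d).image hg.norm).bddAbove ⟨x, hx, rfl⟩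

/-- Fourier decay: `∏ |k_j| ^ m_j * |f̂(k)|` is the size of a Fourier coefficient of `∂^m f`. -/
lemma prod_abs_pow_mul_fourierCoef_le {d : ℕ} {f : (Fin d → ℝ) → ℂ}
    (hf : ContDiff ℝ (⊤ : ℕ∞) f) (hp : IsPer f) (k : Fin d → ℤ) (m : Fin d → ℕ) :
    (∏ j, |(k j : ℝ)| ^ m j) * ‖fourierCoef f k‖ ≤ supOn (box2pi d) (mpd m f) := by
  obtain ⟨h1, h2⟩ := fourierCoef_mpd hf hp k m
  refine le_trans (le_of_eq ?_) (norm_fourierCoef_le h1.continuous k)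
  rw [h2, norm_mul, norm_prod]
  simp

/-! ### One-dimensional estimates and lattice sums -/

/-- Weighted Hölder with weights `s ^ n`, whose total mass is at most `1 / ε` for `s = 1 - ε`. -/
lemma exp_partial_sum_rpow_le {α : ℝ} (hα : 1 < α) {ε t : ℝ} (h0 : 0 < ε) (h1 : ε < 1)
    (ht : 0 ≤ t) (M : ℕ) :
    (∑ n ∈ Finset.range M, ((1 - ε) * t) ^ n / n.factorial) ^ α ≤
      ε ^ (-(α - 1)) * ∑ n ∈ Finset.range M, (t ^ n / n.factorial) ^ α := by
  have hα0 : 0 < α := by linarith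
  have hs : 0 ≤ 1 - ε := by linarith
  have hs1 : 1 - ε < 1 := by linarith
  have hH := Real.inner_le_weight_mul_Lp_of_nonneg (Finset.range M) hα.le
    (fun n => (1 - ε) ^ n) (fun n => t ^ n / n.factorial)
    (fun n => by positivity) (fun n => by positivity)
  have hgeo : ∑ n ∈ Finset.range M, (1 - ε) ^ n ≤ ε⁻¹ := by
    have := (summable_geometric_of_lt_one hs hs1).sum_le_tsum (Finset.range M)
      (fun n _ => by positivity)
    rwa [tsum_geometric_of_lt_one hs hs1, sub_sub_cancel] at this
  have hw : ∑ n ∈ Finset.range M, (1 - ε) ^ n * (t ^ n / n.factorial) ^ α ≤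
      ∑ n ∈ Finset.range M, (t ^ n / n.factorial) ^ α := by
    refine Finset.sum_le_sum fun n _ => ?_
    exact mul_le_of_le_one_left (by positivity) (pow_le_one₀ hs hs1.le)
  have hα1 : 0 ≤ 1 - α⁻¹ := by
    rw [sub_nonneg]; exact inv_le_one_of_one_le₀ hα.le
  have hw0 : 0 ≤ ∑ n ∈ Finset.range M, (1 - ε) ^ n * (t ^ n / n.factorial) ^ α :=
    Finset.sum_nonneg fun n _ => by positivity
  have hg0 : 0 ≤ ∑ n ∈ Finset.range M, (1 - ε) ^ n :=
    Finset.sum_nonneg fun n _ => by positivity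
  have hΦ0 := hw0.trans hw
  calc (∑ n ∈ Finset.range M, ((1 - ε) * t) ^ n / n.factorial) ^ α
      = (∑ n ∈ Finset.range M, (1 - ε) ^ n * (t ^ n / n.factorial)) ^ α := by
        congr 1; refine Finset.sum_congr rfl fun n _ => ?_; rw [mul_pow, mul_div_assoc]
    _ ≤ ((ε⁻¹) ^ (1 - α⁻¹) *
          (∑ n ∈ Finset.range M, (t ^ n / n.factorial) ^ α) ^ α⁻¹) ^ α := by
        refine Real.rpow_le_rpow (Finset.sum_nonneg fun n _ => by positivity) (hH.trans ?_) hα0.le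
        gcongr
    _ = _ := by
        rw [Real.mul_rpow (by positivity) (by positivity), ← Real.rpow_mul (by positivity),
          ← Real.rpow_mul hΦ0, inv_mul_cancel₀ hα0.ne', Real.rpow_one,
          Real.inv_rpow h0.le, ← Real.rpow_neg h0.le]
        congr 2
        field_simp

/-- Comparison with `∫₀^∞ exp (-b x ^ p) dx`. -/
lemma sum_exp_neg_rpow_le {p b : ℝ} (hp : 0 < p) (hb : 0 < b) (N : ℕ) :
    ∑ n ∈ Finset.range N, Real.exp (-b * ((n + 1 : ℕ) : ℝ) ^ p) ≤
      b ^ (-1 / p) * Real.Gamma (1 / p + 1) := by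
  have hanti : AntitoneOn (fun x : ℝ => Real.exp (-b * x ^ p)) (Set.Ici 0) := by
    intro x hx y hy hxy
    have : x ^ p ≤ y ^ p := Real.rpow_le_rpow hx hxy hp.le
    exact Real.exp_le_exp.2 (by nlinarith)
  have h := (hanti.mono (Set.Icc_subset_Ici_self : Set.Icc 0 (0 + (N : ℝ)) ⊆ _)).sum_le_integral
  simp only [zero_add] at h
  refine h.trans ?_
  rw [← integral_exp_neg_mul_rpow hp hb, intervalIntegral.integral_of_le (Nat.cast_nonneg N)]
  refine setIntegral_mono_set ?_ (ae_of_all _ fun x => (Real.exp_pos _).le)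
    (Set.Ioc_subset_Ioi_self.eventuallyLE)
  simpa using integrableOn_rpow_mul_exp_neg_mul_rpow (s := 0) (by norm_num) hp hb

lemma sum_int_exp_le {α δ : ℝ} (hα : 1 < α) (h0 : 0 < δ) (h1 : δ ≤ 1) (s : Finset ℤ) :
    ∑ n ∈ s, Real.exp (-(α * δ) * |(n : ℝ)| ^ (1 / α)) ≤
      (1 + 2 * Real.Gamma (α + 1)) * δ ^ (-α) := by
  have hα0 : 0 < α := by linarith
  set g : ℤ → ℝ := fun n => Real.exp (-(α * δ) * |(n : ℝ)| ^ (1 / α)) with hg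
  -- It suffices to sum over a symmetric interval containing `s`.
  obtain ⟨N, hN⟩ : ∃ N : ℕ, s ⊆ Finset.Icc (-(N : ℤ)) N := by
    refine ⟨s.sup Int.natAbs, fun n hn => ?_⟩
    have : n.natAbs ≤ s.sup Int.natAbs := Finset.le_sup (f := Int.natAbs) hn
    rw [Finset.mem_Icc]; omega
  have hsym : ∀ N : ℕ, ∑ n ∈ Finset.Icc (-(N : ℤ)) N, g n =
      1 + 2 * ∑ n ∈ Finset.range N, Real.exp (-(α * δ) * ((n + 1 : ℕ) : ℝ) ^ (1 / α)) := by
    intro N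
    induction N with
    | zero => simp [hg, hα0.ne']
    | succ N ih =>
      have hset : Finset.Icc (-((N + 1 : ℕ) : ℤ)) ((N + 1 : ℕ) : ℤ) =
          insert (-((N + 1 : ℕ) : ℤ)) (insert ((N + 1 : ℕ) : ℤ) (Finset.Icc (-(N : ℤ)) N)) := by
        ext x; simp only [Finset.mem_Icc, Finset.mem_insert]; omega
      have hab : |(N : ℝ) + 1| = N + 1 := abs_of_nonneg (by positivity)
      have hab' : |(-1 : ℝ) + -N| = N + 1 := by rw [← hab, ← abs_neg]; congr 1; ring
      rw [hset, Finset.sum_insert, Finset.sum_insert, ih, Finset.sum_range_succ]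
      · simp [hg, hab, hab']; ring
      · simp
      · simp only [Finset.mem_Icc, Finset.mem_insert]; omega
  have hδ : 1 ≤ δ ^ (-α) := Real.one_le_rpow_of_pos_of_le_one_of_nonpos h0 h1 (by linarith)
  have hG : 0 < Real.Gamma (α + 1) := Real.Gamma_pos_of_pos (by linarith)
  have hS := sum_exp_neg_rpow_le (p := 1 / α) (b := α * δ) (by positivity) (by positivity) N
  have e1 : -1 / (1 / α) = -α := by field_simp
  rw [e1, one_div_one_div, Real.mul_rpow hα0.le h0.le] at hS
  have hα' : α ^ (-α) ≤ 1 := Real.rpow_le_one_of_one_le_of_nonpos hα.le (by linarith)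
  have : α ^ (-α) * δ ^ (-α) * Real.Gamma (α + 1) ≤ δ ^ (-α) * Real.Gamma (α + 1) := by
    gcongr
    exact mul_le_of_le_one_left (by positivity) hα'
  calc _ ≤ ∑ n ∈ Finset.Icc (-(N : ℤ)) N, g n :=
        Finset.sum_le_sum_of_subset_of_nonneg hN fun _ _ _ => (Real.exp_pos _).le
    _ ≤ _ := by rw [hsym]; nlinarith

/-- Bounding a finite sum over the lattice by the `d`-th power of the one-dimensional sum. -/
lemma sum_lattice_exp_le {d : ℕ} {α δ : ℝ} (hα : 1 < α) (h0 : 0 < δ) (h1 : δ ≤ 1)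
    (u : Finset (Fin d → ℤ)) :
    ∑ k ∈ u, Real.exp (-(α * δ) * ∑ j, |(k j : ℝ)| ^ (1 / α)) ≤
      ((1 + 2 * Real.Gamma (α + 1)) * δ ^ (-α)) ^ d := by
  set F : Fin d → Finset ℤ := fun j => u.image fun k => k j
  have hsub : u ⊆ Fintype.piFinset F := fun k hk => by
    rw [Fintype.mem_piFinset]; exact fun j => Finset.mem_image_of_mem _ hk
  calc _ ≤ ∑ k ∈ Fintype.piFinset F, Real.exp (-(α * δ) * ∑ j, |(k j : ℝ)| ^ (1 / α)) :=
        Finset.sum_le_sum_of_subset_of_nonneg hsub fun _ _ _ => (Real.exp_pos _).le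
    _ = ∏ j, ∑ n ∈ F j, Real.exp (-(α * δ) * |(n : ℝ)| ^ (1 / α)) := by
        rw [Finset.prod_univ_sum]
        simp only [Finset.mul_sum, Real.exp_sum]
    _ ≤ ∏ _j : Fin d, ((1 + 2 * Real.Gamma (α + 1)) * δ ^ (-α)) :=
        Finset.prod_le_prod (fun j _ => Finset.sum_nonneg fun _ _ => (Real.exp_pos _).le)
          fun j _ => sum_int_exp_le hα h0 h1 (F j)
    _ = _ := by simp

/-! ### Pointwise decay of the Fourier coefficients -/

lemma gevreyTerm_nonneg_s7 {d : ℕ} {α L : ℝ} (hL : 0 < L) (f : (Fin d → ℝ) → ℂ) (m : Fin d → ℕ) :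
    0 ≤ gevreyTerm α (fun _ => L) (box2pi d) f m := by
  unfold gevreyTerm supOn
  refine mul_nonneg (by positivity) (Real.sSup_nonneg ?_)
  rintro _ ⟨x, -, rfl⟩
  exact norm_nonneg _

/-- The `m`-th Gevrey term controls `f̂(k)` with weight
`∏ j, (t_j ^ m_j / m_j!) ^ α`, where `t_j = L |k_j| ^ (1 / α)`. -/
lemma weight_mul_fourierCoef_le {d : ℕ} {α L : ℝ} (hα : 1 < α) (hL : 0 < L)
    {f : (Fin d → ℝ) → ℂ} (hf : ContDiff ℝ (⊤ : ℕ∞) f) (hp : IsPer f)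
    (k : Fin d → ℤ) (m : Fin d → ℕ) :
    (∏ j, ((L * |(k j : ℝ)| ^ (1 / α)) ^ m j / (m j).factorial) ^ α) * ‖fourierCoef f k‖ ≤
      gevreyTerm α (fun _ => L) (box2pi d) f m := by
  have hα0 : 0 < α := by linarith
  have h := prod_abs_pow_mul_fourierCoef_le hf hp k m
  have e : (∏ j, ((L * |(k j : ℝ)| ^ (1 / α)) ^ m j / (m j).factorial) ^ α) =
      ((∏ j, L ^ m j) / ∏ j, ((m j).factorial : ℝ)) ^ α * ∏ j, |(k j : ℝ)| ^ m j := by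
    rw [← Finset.prod_div_distrib, ← Real.finsetProd_rpow _ _ (fun _ _ => by positivity),
      ← Finset.prod_mul_distrib]
    refine Finset.prod_congr rfl fun j _ => ?_
    rw [mul_pow, mul_div_right_comm, Real.mul_rpow (by positivity) (by positivity)]
    congr 1
    rw [← Real.rpow_natCast, ← Real.rpow_mul (by positivity), ← Real.rpow_mul (by positivity),
      ← Real.rpow_natCast]
    congr 1
    field_simp
  rw [e, mul_assoc]
  exact mul_le_mul_of_nonneg_left h (by positivity)

/-- Summing the weights over `m` and applying the Hölder estimate in each coordinate. -/
lemma exp_mul_fourierCoef_le {d : ℕ} {α L ε : ℝ} (hα : 1 < α) (hL : 0 < L)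
    (h0 : 0 < ε) (h1 : ε < 1) {f : (Fin d → ℝ) → ℂ} (hf : ContDiff ℝ (⊤ : ℕ∞) f)
    (hp : IsPer f) (hs : Summable (gevreyTerm α (fun _ => L) (box2pi d) f)) (k : Fin d → ℤ) :
    Real.exp (α * ((1 - ε) * L) * ∑ j, |(k j : ℝ)| ^ (1 / α)) * ‖fourierCoef f k‖ ≤
      ε ^ (-((α - 1) * d)) * ∑' m, gevreyTerm α (fun _ => L) (box2pi d) f m := by
  have hα0 : 0 < α := by linarith
  have hs0 : 0 ≤ 1 - ε := by linarith
  set t : Fin d → ℝ := fun j => L * |(k j : ℝ)| ^ (1 / α) with ht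
  have ht0 : ∀ j, 0 ≤ t j := fun j => by positivity
  set N := ∑' m, gevreyTerm α (fun _ => L) (box2pi d) f m with hN
  have hM : ∀ M : ℕ,
      (∏ j, (∑ n ∈ Finset.range M, ((1 - ε) * t j) ^ n / n.factorial) ^ α) *
        ‖fourierCoef f k‖ ≤ ε ^ (-((α - 1) * d)) * N := by
    intro M
    have hsum : (∏ j, ∑ n ∈ Finset.range M, (t j ^ n / n.factorial) ^ α) *
        ‖fourierCoef f k‖ ≤ N := by
      rw [Finset.prod_univ_sum, Finset.sum_mul]
      exact (Finset.sum_le_sum fun m _ => weight_mul_fourierCoef_le hα hL hf hp k m).trans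
        (hs.sum_le_tsum _ fun m _ => gevreyTerm_nonneg_s7 hL f m)
    calc _ ≤ (∏ j, (ε ^ (-(α - 1)) * ∑ n ∈ Finset.range M, (t j ^ n / n.factorial) ^ α)) *
          ‖fourierCoef f k‖ := by
          refine mul_le_mul_of_nonneg_right (Finset.prod_le_prod (fun j _ => ?_) fun j _ =>
            exp_partial_sum_rpow_le hα h0 h1 (ht0 j) M) (norm_nonneg _)
          exact Real.rpow_nonneg (Finset.sum_nonneg fun n _ => by have := ht0 j; positivity) _
      _ = ε ^ (-((α - 1) * d)) * ((∏ j, ∑ n ∈ Finset.range M, (t j ^ n / n.factorial) ^ α) *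
          ‖fourierCoef f k‖) := by
          rw [Finset.prod_mul_distrib, Finset.prod_const, Finset.card_univ, Fintype.card_fin,
            ← Real.rpow_natCast, ← Real.rpow_mul h0.le, mul_assoc, neg_mul]
      _ ≤ _ := by gcongr
  have hlim : Filter.Tendsto (fun M : ℕ =>
      (∏ j, (∑ n ∈ Finset.range M, ((1 - ε) * t j) ^ n / n.factorial) ^ α) *
        ‖fourierCoef f k‖) Filter.atTop
      (nhds ((∏ j, Real.exp ((1 - ε) * t j) ^ α) * ‖fourierCoef f k‖)) := by
    refine Filter.Tendsto.mul_const _ (tendsto_finsetProd _ fun j _ => ?_)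
    refine Filter.Tendsto.rpow_const ?_ (Or.inr hα0.le)
    rw [Real.exp_eq_exp_ℝ]
    exact (NormedSpace.expSeries_div_hasSum_exp ((1 - ε) * t j)).tendsto_sum_nat
  refine le_trans (le_of_eq ?_) (le_of_tendsto' hlim hM)
  congr 1
  rw [Finset.mul_sum, Real.exp_sum]
  refine Finset.prod_congr rfl fun j _ => ?_
  rw [← Real.exp_mul, ht]
  congr 1
  ring

/-- a uniform constant `C_{α,d}` with
`‖f‖_{𝓕_{α,(1−ε)L−δ}} ≤ C_{α,d} ε^{−(α−1)d} δ^{−αd} ‖f‖_{α,L}`. -/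
theorem fourier_weighted_le_gevrey_const {d : ℕ} (hd : 1 ≤ d) {α : ℝ} (hα : 1 < α) :
    ∃ C : ℝ, 0 < C ∧
      ∀ (L ε δ : ℝ) (f : (Fin d → ℝ) → ℂ),
        0 < L → 0 < ε → ε < 1 → 0 < δ → δ ≤ 1 →
        ContDiff ℝ (⊤ : ℕ∞) f →
        (∀ (x : Fin d → ℝ) (j : Fin d),
          f (x + (2 * Real.pi) • (Pi.single j 1 : Fin d → ℝ)) = f x) →
        Summable (gevreyTerm α (fun _ => L) (box2pi d) f) →
        Summable (fun k : Fin d → ℤ =>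
          Real.exp (α * ((1 - ε) * L - δ) * ∑ j, |(k j : ℝ)| ^ (1 / α)) *
            ‖fourierCoef f k‖) ∧
        (∑' k : Fin d → ℤ,
            Real.exp (α * ((1 - ε) * L - δ) * ∑ j, |(k j : ℝ)| ^ (1 / α)) *
              ‖fourierCoef f k‖)
          ≤ C * ε ^ (-((α - 1) * d)) * δ ^ (-(α * d)) *
              ∑' m, gevreyTerm α (fun _ => L) (box2pi d) f m := by
  have hα0 : 0 < α := by linarith
  have hG : 0 < Real.Gamma (α + 1) := Real.Gamma_pos_of_pos (by linarith)
  refine ⟨(1 + 2 * Real.Gamma (α + 1)) ^ d, by positivity, ?_⟩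
  intro L ε δ f hL h0 h1 hδ0 hδ1 hf hp hs
  set N := ∑' m, gevreyTerm α (fun _ => L) (box2pi d) f m with hN
  have hN0 : 0 ≤ N := tsum_nonneg fun m => gevreyTerm_nonneg_s7 hL f m
  have hfin : ∀ u : Finset (Fin d → ℤ),
      ∑ k ∈ u, Real.exp (α * ((1 - ε) * L - δ) * ∑ j, |(k j : ℝ)| ^ (1 / α)) *
        ‖fourierCoef f k‖ ≤
      (1 + 2 * Real.Gamma (α + 1)) ^ d * ε ^ (-((α - 1) * d)) * δ ^ (-(α * d)) * N := by
    intro u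
    calc _ ≤ ∑ k ∈ u, Real.exp (-(α * δ) * ∑ j, |(k j : ℝ)| ^ (1 / α)) *
          (ε ^ (-((α - 1) * d)) * N) := by
          refine Finset.sum_le_sum fun k _ => ?_
          have e : α * ((1 - ε) * L - δ) * ∑ j, |(k j : ℝ)| ^ (1 / α) =
              -(α * δ) * ∑ j, |(k j : ℝ)| ^ (1 / α) +
                α * ((1 - ε) * L) * ∑ j, |(k j : ℝ)| ^ (1 / α) := by ring
          rw [e, Real.exp_add, mul_assoc]
          exact mul_le_mul_of_nonneg_left (exp_mul_fourierCoef_le hα hL h0 h1 hf hp hs k)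
            (Real.exp_pos _).le
      _ ≤ ((1 + 2 * Real.Gamma (α + 1)) * δ ^ (-α)) ^ d * (ε ^ (-((α - 1) * d)) * N) := by
          rw [← Finset.sum_mul]
          exact mul_le_mul_of_nonneg_right (sum_lattice_exp_le hα hδ0 hδ1 u) (by positivity)
      _ = _ := by
          rw [mul_pow, ← Real.rpow_natCast (δ ^ (-α)), ← Real.rpow_mul hδ0.le, neg_mul]
          ring
  have hnn : 0 ≤ fun k : Fin d → ℤ =>
      Real.exp (α * ((1 - ε) * L - δ) * ∑ j, |(k j : ℝ)| ^ (1 / α)) * ‖fourierCoef f k‖ :=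
    fun k => by positivity
  exact ⟨summable_of_sum_le hnn hfin, Real.tsum_le_of_sum_le hnn hfin⟩
end
end
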